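/- Let a, b ∈ ℝ. On U = {(u,φ,p_u,p_φ) ∈ ℝ⁴ : 0 < u < 1}, with x₁ = √(1−u²)sin φ, x₂ = √(1−u²)cos φ, x₃ = u, J₁ = (u/√(1−u²))sin φ·p_φ + √(1−u²)cos φ·p_u, J₂ = (u/√(1−u²))cos φ·p_φ − √(1−u²)sin φ·p_u, J₃ = −p_φ, define H₁ = J₁² + J₂² + (4/3)J₃² + a·x₁/x₃^{2/3} + b/x₃^{2/3}, H₂ = −(2/3)J₃(J₁² + J₂² + (8/9)J₃² + b/x₃^{2/3}) + a·x₃^{1/3}J₁ − 2a·x₁J₃/(3x₃^{2/3}), and the 2×2 control matrix F with entries F₁₁ = −x₃^{1/3}(J₁+iJ₂)/(x₁+ix₂) + 2J₃/(3x₃^{2/3}), F₁₂ = 1/x₃^{2/3}, F₂₁ = −a·x₃^{2/3}/(2(x₁+ix₂)) + 2x₃^{1/3}(J₁+iJ₂)J₃/(3(x₁+ix₂)) − 4J₃²/(9x₃^{2/3}), F₂₂ = −2J₃/(3x₃^{2/3}). Let P be the canonical matrix (P₁₃ = P₂₄ = 1, P₃₁ = P₄₂ = −1, else 0) and Π′ the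 Goryachev second Poisson matrix with upper entries Π′₁₂ = u^{1/3}, Π′₁₃ = i·u^{1/3}p_u − u^{4/3}p_φ/(1−u²), Π′₁₄ = 0, Π′₂₃ = (1−4u²)p_u/(3u^{2/3}(1−u²)) + i·u^{1/3}(4−u²)p_φ/(3(1−u²)²), Π′₂₄ = 0, Π′₃₄ = i·a·e^{iφ}/(2u^{1/3}√(1−u²)). Then for i = 1, 2 the vector identity Π′·∇H_i = P·(F_{i1}∇H₁ + F_{i2}∇H₂) holds on U, where ∇ denotes the gradient with respect to (u,φ,p_u,p_φ). -/

import Mathlib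

open Complex

/-- Partial derivative of a ℂ-valued function on ℝ⁴ in the `i`-th coordinate. -/
noncomputable def pdC (i : Fin 4) (f : (Fin 4 → ℝ) → ℂ) (z : Fin 4 → ℝ) : ℂ :=
  fderiv ℝ f z (Pi.single i 1)

/-- The second (complex) Poisson matrix Π′ of the Goryachev system on T*S²,
in coordinates z = (u, φ, p_u, p_φ); it is P′_{μν} at μ = 0, ν = −a². -/
noncomputable def GorP (a : ℝ) (z : Fin 4 → ℝ) : Matrix (Fin 4) (Fin 4) ℂ :=
  let e12 : ℂ := ((z 0 ^ ((1 : ℝ) / 3) : ℝ) : ℂ)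
  let e13 : ℂ := Complex.I * ((z 0 ^ ((1 : ℝ) / 3) * z 2 : ℝ) : ℂ)
    - ((z 0 ^ ((4 : ℝ) / 3) * z 3 / (1 - (z 0) ^ 2) : ℝ) : ℂ)
  let e23 : ℂ := (((1 - 4 * (z 0) ^ 2) * z 2 / (3 * z 0 ^ ((2 : ℝ) / 3) * (1 - (z 0) ^ 2)) : ℝ) : ℂ)
    + Complex.I * ((z 0 ^ ((1 : ℝ) / 3) * (4 - (z 0) ^ 2) * z 3 / (3 * (1 - (z 0) ^ 2) ^ 2) : ℝ) : ℂ)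
  let e34 : ℂ := Complex.I * (a : ℂ) * Complex.exp (Complex.I * ((z 1 : ℝ) : ℂ))
    / ((2 * z 0 ^ ((1 : ℝ) / 3) * Real.sqrt (1 - (z 0) ^ 2) : ℝ) : ℂ)
  !![0, e12, e13, 0;
     -e12, 0, e23, 0;
     -e13, -e23, 0, e34;
     0, 0, -e34, 0]

/-- Partial derivative of a real-valued function on ℝ⁴. -/
noncomputable def pd4 (i : Fin 4) (f : (Fin 4 → ℝ) → ℝ) (z : Fin 4 → ℝ) : ℝ :=
  fderiv ℝ f z (Pi.single i 1)

/-- x₁ = √(1−u²) sin φ, x₂ = √(1−u²) cos φ, x₃ = u. -/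
noncomputable def sphX : Fin 3 → (Fin 4 → ℝ) → ℝ
  | 0 => fun z => Real.sqrt (1 - (z 0) ^ 2) * Real.sin (z 1)
  | 1 => fun z => Real.sqrt (1 - (z 0) ^ 2) * Real.cos (z 1)
  | 2 => fun z => z 0

/-- J₁, J₂, J₃ on T*S² in coordinates (u, φ, p_u, p_φ). -/
noncomputable def sphJ : Fin 3 → (Fin 4 → ℝ) → ℝ
  | 0 => fun z => z 0 / Real.sqrt (1 - (z 0) ^ 2) * Real.sin (z 1) * z 3
      + Real.sqrt (1 - (z 0) ^ 2) * Real.cos (z 1) * z 2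
  | 1 => fun z => z 0 / Real.sqrt (1 - (z 0) ^ 2) * Real.cos (z 1) * z 3
      - Real.sqrt (1 - (z 0) ^ 2) * Real.sin (z 1) * z 2
  | 2 => fun z => -z 3

/-- The quadratic integral H₁ of the Goryachev system on T*S². -/
noncomputable def H1Gor (a b : ℝ) (z : Fin 4 → ℝ) : ℝ :=
  (sphJ 0 z) ^ 2 + (sphJ 1 z) ^ 2 + (4 / 3) * (sphJ 2 z) ^ 2
    + a * sphX 0 z / (sphX 2 z) ^ ((2 : ℝ) / 3) + b / (sphX 2 z) ^ ((2 : ℝ) / 3)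

/-- The cubic integral H₂ of the Goryachev system on T*S². -/
noncomputable def H2Gor (a b : ℝ) (z : Fin 4 → ℝ) : ℝ :=
  -(2 / 3) * sphJ 2 z * ((sphJ 0 z) ^ 2 + (sphJ 1 z) ^ 2 + (8 / 9) * (sphJ 2 z) ^ 2
      + b / (sphX 2 z) ^ ((2 : ℝ) / 3))
    + a * (sphX 2 z) ^ ((1 : ℝ) / 3) * sphJ 0 z
    - 2 * a * sphX 0 z * sphJ 2 z / (3 * (sphX 2 z) ^ ((2 : ℝ) / 3))

/-- The canonical Poisson matrix P on ℝ⁴, as a complex matrix. -/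
noncomputable def canPC : Matrix (Fin 4) (Fin 4) ℂ :=
  !![0, 0, 1, 0;
     0, 0, 0, 1;
     -1, 0, 0, 0;
     0, -1, 0, 0]

/-- Entry F₁₁ of the control matrix of the Goryachev system. -/
noncomputable def F11 (z : Fin 4 → ℝ) : ℂ :=
  -(((sphX 2 z ^ ((1 : ℝ) / 3) : ℝ) : ℂ))
      * ((sphJ 0 z : ℂ) + Complex.I * (sphJ 1 z : ℂ))
      / ((sphX 0 z : ℂ) + Complex.I * (sphX 1 z : ℂ))
    + 2 * (sphJ 2 z : ℂ) / (3 * ((sphX 2 z ^ ((2 : ℝ) / 3) : ℝ) : ℂ))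

/-- Entry F₁₂ of the control matrix of the Goryachev system. -/
noncomputable def F12 (z : Fin 4 → ℝ) : ℂ :=
  1 / ((sphX 2 z ^ ((2 : ℝ) / 3) : ℝ) : ℂ)

/-- Entry F₂₁ of the control matrix of the Goryachev system. -/
noncomputable def F21 (a : ℝ) (z : Fin 4 → ℝ) : ℂ :=
  -(a : ℂ) * ((sphX 2 z ^ ((2 : ℝ) / 3) : ℝ) : ℂ)
      / (2 * ((sphX 0 z : ℂ) + Complex.I * (sphX 1 z : ℂ)))
    + 2 * ((sphX 2 z ^ ((1 : ℝ) / 3) : ℝ) : ℂ)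
      * ((sphJ 0 z : ℂ) + Complex.I * (sphJ 1 z : ℂ)) * (sphJ 2 z : ℂ)
      / (3 * ((sphX 0 z : ℂ) + Complex.I * (sphX 1 z : ℂ)))
    - 4 * (sphJ 2 z : ℂ) ^ 2 / (9 * ((sphX 2 z ^ ((2 : ℝ) / 3) : ℝ) : ℂ))

/-- Entry F₂₂ of the control matrix of the Goryachev system. -/
noncomputable def F22 (z : Fin 4 → ℝ) : ℂ :=
  -2 * (sphJ 2 z : ℂ) / (3 * ((sphX 2 z ^ ((2 : ℝ) / 3) : ℝ) : ℂ))

/-- The linear functional on `ℝ⁴` with the given components. -/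
noncomputable def gradientFunctional (g : Fin 4 → ℝ) : (Fin 4 → ℝ) →L[ℝ] ℝ :=
  ∑ i, g i • ContinuousLinearMap.proj (R := ℝ) (φ := fun _ : Fin 4 => ℝ) i

lemma pd4_eq_of_hasFDerivAt {f : (Fin 4 → ℝ) → ℝ} {z : Fin 4 → ℝ} {g : Fin 4 → ℝ}
    (h : HasFDerivAt f (gradientFunctional g) z) (i : Fin 4) : pd4 i f z = g i := by
  simp [pd4, h.fderiv, gradientFunctional, Pi.single_apply]

lemma hasFDerivAt_coord (i : Fin 4) (z : Fin 4 → ℝ) :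
    HasFDerivAt (fun y : Fin 4 → ℝ => y i)
      (ContinuousLinearMap.proj (R := ℝ) (φ := fun _ : Fin 4 => ℝ) i) z :=
  hasFDerivAt_apply i z

lemma eventually_coord_mem_Ioo {z : Fin 4 → ℝ} (h0 : 0 < z 0) (h1 : z 0 < 1) :
    ∀ᶠ y in nhds z, 0 < y 0 ∧ y 0 < 1 :=
  ((hasFDerivAt_coord 0 z).continuousAt.eventually_const_lt h0).and
    ((hasFDerivAt_coord 0 z).continuousAt.eventually_lt_const h1)

lemma sphJ_sq_add_sq {z : Fin 4 → ℝ} (h : 0 < 1 - z 0 ^ 2) :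
    sphJ 0 z ^ 2 + sphJ 1 z ^ 2
      = z 0 ^ 2 * z 3 ^ 2 / (1 - z 0 ^ 2) + (1 - z 0 ^ 2) * z 2 ^ 2 := by
  have hs : Real.sqrt (1 - z 0 ^ 2) ^ 2 = 1 - z 0 ^ 2 := Real.sq_sqrt h.le
  have hs0 : Real.sqrt (1 - z 0 ^ 2) ≠ 0 := (Real.sqrt_pos.mpr h).ne'
  have htrig := Real.sin_sq_add_cos_sq (z 1)
  simp only [sphJ]
  generalize Real.sqrt (1 - z 0 ^ 2) = s at *
  rw [← hs]
  field_simp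
  linear_combination (z 0 ^ 2 * z 3 ^ 2 + s ^ 4 * z 2 ^ 2) * htrig

lemma hasDerivAt_rpow_two_thirds {u : ℝ} (hu : 0 < u) :
    HasDerivAt (fun x : ℝ => x ^ ((2 : ℝ) / 3)) (2 / (3 * u ^ ((1 : ℝ) / 3))) u := by
  convert Real.hasDerivAt_rpow_const (x := u) (p := (2 : ℝ) / 3) (Or.inl hu.ne') using 1
  rw [show (2 : ℝ) / 3 - 1 = -(1 / 3) by norm_num, Real.rpow_neg hu.le]
  field_simp

lemma hasDerivAt_rpow_one_third {u : ℝ} (hu : 0 < u) :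
    HasDerivAt (fun x : ℝ => x ^ ((1 : ℝ) / 3)) (1 / (3 * u ^ ((2 : ℝ) / 3))) u := by
  convert Real.hasDerivAt_rpow_const (x := u) (p := (1 : ℝ) / 3) (Or.inl hu.ne') using 1
  rw [show (1 : ℝ) / 3 - 1 = -(2 / 3) by norm_num, Real.rpow_neg hu.le]
  field_simp

lemma hasDerivAt_sqrt_one_sub_sq {u : ℝ} (hu : 0 < 1 - u ^ 2) :
    HasDerivAt (fun x : ℝ => Real.sqrt (1 - x ^ 2)) (-u / Real.sqrt (1 - u ^ 2)) u := by
  convert ((hasDerivAt_pow 2 u).const_sub 1).sqrt hu.ne' using 1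
  simp
  field_simp

lemma rpow_two_thirds_eq {u : ℝ} (hu : 0 < u) :
    u ^ ((2 : ℝ) / 3) = (u ^ ((1 : ℝ) / 3)) ^ 2 := by
  rw [← Real.rpow_natCast, ← Real.rpow_mul hu.le]
  norm_num

lemma rpow_four_thirds_eq {u : ℝ} (hu : 0 < u) :
    u ^ ((4 : ℝ) / 3) = (u ^ ((1 : ℝ) / 3)) ^ 4 := by
  rw [← Real.rpow_natCast, ← Real.rpow_mul hu.le]
  norm_num

lemma rpow_one_third_cube {u : ℝ} (hu : 0 < u) :
    (u ^ ((1 : ℝ) / 3)) ^ 3 = u := by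
  rw [← Real.rpow_natCast, ← Real.rpow_mul hu.le]
  norm_num

/-- The gradient of `H1Gor`, in terms of `t = u^{1/3}`, `s = √(1 - u²)`, `S = sin φ`,
`C = cos φ`, `p = p_u`, `q = p_φ`. -/
noncomputable def gradH1 (a b t s S C p q : ℝ) : Fin 4 → ℝ :=
  ![2 * t ^ 3 * q ^ 2 / s ^ 4 - 2 * t ^ 3 * p ^ 2 - a * t * S / s
      - 2 * (a * s * S + b) / (3 * t ^ 5),
    a * s * C / t ^ 2,
    2 * s ^ 2 * p,
    2 * t ^ 6 * q / s ^ 2 + 8 / 3 * q]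

/-- The gradient of `H2Gor`, in the same variables as `gradH1`. -/
noncomputable def gradH2 (a b t s S C p q : ℝ) : Fin 4 → ℝ :=
  ![2 / 3 * q * (2 * t ^ 3 * q ^ 2 / s ^ 4 - 2 * t ^ 3 * p ^ 2 - a * t * S / s
      - 2 * (a * s * S + b) / (3 * t ^ 5))
      + a * (S * q * (4 * t / (3 * s) + t ^ 7 / s ^ 3) + C * p * (s / (3 * t ^ 2) - t ^ 4 / s)),
    2 / 3 * q * (a * s * C / t ^ 2) + a * t * (t ^ 3 / s * C * q - s * S * p),
    4 / 3 * q * s ^ 2 * p + a * t * s * C,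
    2 / 3 * (t ^ 6 * q ^ 2 / s ^ 2 + s ^ 2 * p ^ 2 + 8 / 9 * q ^ 2 + (a * s * S + b) / t ^ 2)
      + 2 / 3 * q * (2 * t ^ 6 * q / s ^ 2 + 16 / 9 * q) + a * t ^ 4 * S / s]

/-- The potential energy term of `H1Gor`. -/
noncomputable def potential (a b : ℝ) (z : Fin 4 → ℝ) : ℝ :=
  (a * (Real.sqrt (1 - z 0 ^ 2) * Real.sin (z 1)) + b) / z 0 ^ ((2 : ℝ) / 3)

/-- The kinetic energy term `J₁² + J₂²` in canonical coordinates. -/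
noncomputable def kinetic (z : Fin 4 → ℝ) : ℝ :=
  z 0 ^ 2 * z 3 ^ 2 / (1 - z 0 ^ 2) + (1 - z 0 ^ 2) * z 2 ^ 2

lemma H1Gor_eq (a b : ℝ) {z : Fin 4 → ℝ} (h0 : 0 < z 0) (h1 : z 0 < 1) :
    H1Gor a b z = kinetic z + 4 / 3 * z 3 ^ 2 + potential a b z := by
  have hD : 0 < 1 - z 0 ^ 2 := by nlinarith
  rw [H1Gor, sphJ_sq_add_sq hD]
  simp only [sphJ, sphX, kinetic, potential]
  ring

lemma H2Gor_eq (a b : ℝ) {z : Fin 4 → ℝ} (h0 : 0 < z 0) (h1 : z 0 < 1) :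
    H2Gor a b z = 2 / 3 * z 3 * (kinetic z + 8 / 9 * z 3 ^ 2 + potential a b z)
      + a * z 0 ^ ((1 : ℝ) / 3) * sphJ 0 z := by
  have hD : 0 < 1 - z 0 ^ 2 := by nlinarith
  have hw : z 0 ^ ((2 : ℝ) / 3) ≠ 0 := (Real.rpow_pos_of_pos h0 _).ne'
  rw [H2Gor, sphJ_sq_add_sq hD]
  simp only [sphJ, sphX, kinetic, potential]
  field_simp
  ring

lemma hasFDerivAt_kinetic {z : Fin 4 → ℝ} (hD : 0 < 1 - z 0 ^ 2) :
    HasFDerivAt kinetic (gradientFunctional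
      ![2 * z 0 * z 3 ^ 2 / (1 - z 0 ^ 2) ^ 2 - 2 * z 0 * z 2 ^ 2, 0,
        2 * (1 - z 0 ^ 2) * z 2, 2 * z 0 ^ 2 * z 3 / (1 - z 0 ^ 2)]) z := by
  have hu := hasFDerivAt_coord 0 z
  have hp := hasFDerivAt_coord 2 z
  have hq := hasFDerivAt_coord 3 z
  have hd := (hu.pow 2).const_sub 1
  refine ((((hu.pow 2).mul (hq.pow 2)).mul ((hasDerivAt_inv hD.ne').comp_hasFDerivAt z hd)).add
    (hd.mul (hp.pow 2))).congr_fderiv ?_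
  ext v
  simp [gradientFunctional, Fin.sum_univ_four]
  field_simp
  ring

lemma hasFDerivAt_potential (a b : ℝ) {z : Fin 4 → ℝ} (h0 : 0 < z 0) (hD : 0 < 1 - z 0 ^ 2) :
    HasFDerivAt (potential a b) (gradientFunctional
      ![-a * z 0 ^ ((1 : ℝ) / 3) * Real.sin (z 1) / Real.sqrt (1 - z 0 ^ 2)
          - 2 * (a * Real.sqrt (1 - z 0 ^ 2) * Real.sin (z 1) + b)
            / (3 * (z 0 ^ ((1 : ℝ) / 3)) ^ 5),
        a * Real.sqrt (1 - z 0 ^ 2) * Real.cos (z 1) / (z 0 ^ ((1 : ℝ) / 3)) ^ 2, 0, 0]) z := by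
  have hu := hasFDerivAt_coord 0 z
  have hS := (hasFDerivAt_coord 1 z).sin
  have hs := (hasDerivAt_sqrt_one_sub_sq hD).comp_hasFDerivAt z hu
  have hw := (hasDerivAt_rpow_two_thirds h0).comp_hasFDerivAt z hu
  have hs0 := (Real.sqrt_pos.mpr hD).ne'
  have ht0 := (Real.rpow_pos_of_pos h0 ((1 : ℝ) / 3)).ne'
  have hw0 := (Real.rpow_pos_of_pos h0 ((2 : ℝ) / 3)).ne'
  refine ((((hs.mul hS).const_mul a).add_const b).mul ((hasDerivAt_inv hw0).comp_hasFDerivAt z hw)).congr_fderiv ?_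
  ext v
  simp [gradientFunctional, Fin.sum_univ_four, -one_div]
  rw [rpow_two_thirds_eq h0]
  have hut := rpow_one_third_cube h0
  generalize Real.sqrt (1 - z 0 ^ 2) = s at *
  generalize z 0 ^ ((1 : ℝ) / 3) = t at *
  rw [← hut]
  field_simp
  ring

lemma hasFDerivAt_rpow_mul_sphJ {z : Fin 4 → ℝ} (h0 : 0 < z 0) (hD : 0 < 1 - z 0 ^ 2) :
    HasFDerivAt (fun y => y 0 ^ ((1 : ℝ) / 3) * sphJ 0 y)
      (gradientFunctional
        ![Real.sin (z 1) * z 3 * (4 * z 0 ^ ((1 : ℝ) / 3) / (3 * Real.sqrt (1 - z 0 ^ 2))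
              + (z 0 ^ ((1 : ℝ) / 3)) ^ 7 / Real.sqrt (1 - z 0 ^ 2) ^ 3)
            + Real.cos (z 1) * z 2 * (Real.sqrt (1 - z 0 ^ 2) / (3 * (z 0 ^ ((1 : ℝ) / 3)) ^ 2)
              - (z 0 ^ ((1 : ℝ) / 3)) ^ 4 / Real.sqrt (1 - z 0 ^ 2)),
          z 0 ^ ((1 : ℝ) / 3) * (z 0 / Real.sqrt (1 - z 0 ^ 2) * Real.cos (z 1) * z 3
            - Real.sqrt (1 - z 0 ^ 2) * Real.sin (z 1) * z 2),
          z 0 ^ ((1 : ℝ) / 3) * Real.sqrt (1 - z 0 ^ 2) * Real.cos (z 1),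
          (z 0 ^ ((1 : ℝ) / 3)) ^ 4 * Real.sin (z 1) / Real.sqrt (1 - z 0 ^ 2)]) z := by
  have hu := hasFDerivAt_coord 0 z
  have hp := hasFDerivAt_coord 2 z
  have hq := hasFDerivAt_coord 3 z
  have hS := (hasFDerivAt_coord 1 z).sin
  have hC := (hasFDerivAt_coord 1 z).cos
  have hs := (hasDerivAt_sqrt_one_sub_sq hD).comp_hasFDerivAt z hu
  have ht := (hasDerivAt_rpow_one_third h0).comp_hasFDerivAt z hu
  have hs0 := (Real.sqrt_pos.mpr hD).ne'
  have ht0 := (Real.rpow_pos_of_pos h0 ((1 : ℝ) / 3)).ne'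
  refine (ht.mul ((((hu.mul ((hasDerivAt_inv hs0).comp_hasFDerivAt z hs)).mul hS).mul hq).add
    ((hs.mul hC).mul hp))).congr_fderiv ?_
  ext v
  simp [gradientFunctional, Fin.sum_univ_four, -one_div]
  rw [rpow_two_thirds_eq h0]
  have hut := rpow_one_third_cube h0
  generalize Real.sqrt (1 - z 0 ^ 2) = s at *
  generalize z 0 ^ ((1 : ℝ) / 3) = t at *
  rw [← hut]
  field_simp
  ring

lemma pd4_H1Gor (a b : ℝ) {z : Fin 4 → ℝ} (h0 : 0 < z 0) (h1 : z 0 < 1) (i : Fin 4) :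
    pd4 i (H1Gor a b) z = gradH1 a b (z 0 ^ ((1 : ℝ) / 3)) (Real.sqrt (1 - z 0 ^ 2))
      (Real.sin (z 1)) (Real.cos (z 1)) (z 2) (z 3) i := by
  have hD : 0 < 1 - z 0 ^ 2 := by nlinarith
  refine pd4_eq_of_hasFDerivAt ?_ i
  refine HasFDerivAt.congr_of_eventuallyEq ?_
    ((eventually_coord_mem_Ioo h0 h1).mono fun y hy => H1Gor_eq a b hy.1 hy.2)
  refine (((hasFDerivAt_kinetic hD).add (((hasFDerivAt_coord 3 z).pow 2).const_mul _)).add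
    (hasFDerivAt_potential a b h0 hD)).congr_fderiv ?_
  ext v
  simp [gradientFunctional, Fin.sum_univ_four, gradH1, -one_div]
  have hs := Real.sq_sqrt hD.le
  have hs0 := (Real.sqrt_pos.mpr hD).ne'
  have ht0 := (Real.rpow_pos_of_pos h0 ((1 : ℝ) / 3)).ne'
  have hut := rpow_one_third_cube h0
  generalize Real.sqrt (1 - z 0 ^ 2) = s at *
  generalize z 0 ^ ((1 : ℝ) / 3) = t at *
  rw [← hs, ← hut]
  field_simp
  ring

lemma pd4_H2Gor (a b : ℝ) {z : Fin 4 → ℝ} (h0 : 0 < z 0) (h1 : z 0 < 1) (i : Fin 4) :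
    pd4 i (H2Gor a b) z = gradH2 a b (z 0 ^ ((1 : ℝ) / 3)) (Real.sqrt (1 - z 0 ^ 2))
      (Real.sin (z 1)) (Real.cos (z 1)) (z 2) (z 3) i := by
  have hD : 0 < 1 - z 0 ^ 2 := by nlinarith
  have hq := hasFDerivAt_coord 3 z
  refine pd4_eq_of_hasFDerivAt ?_ i
  refine HasFDerivAt.congr_of_eventuallyEq ?_
    ((eventually_coord_mem_Ioo h0 h1).mono fun y hy =>
      (H2Gor_eq a b hy.1 hy.2).trans (by rw [mul_assoc a]))
  refine (((hq.const_mul _).mul (((hasFDerivAt_kinetic hD).add ((hq.pow 2).const_mul _)).add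
    (hasFDerivAt_potential a b h0 hD))).add
    ((hasFDerivAt_rpow_mul_sphJ h0 hD).const_mul a)).congr_fderiv ?_
  ext v
  simp [gradientFunctional, Fin.sum_univ_four, gradH2, kinetic, potential, -one_div]
  rw [rpow_two_thirds_eq h0]
  have hs := Real.sq_sqrt hD.le
  have hs0 := (Real.sqrt_pos.mpr hD).ne'
  have ht0 := (Real.rpow_pos_of_pos h0 ((1 : ℝ) / 3)).ne'
  have hut := rpow_one_third_cube h0
  generalize Real.sqrt (1 - z 0 ^ 2) = s at *
  generalize z 0 ^ ((1 : ℝ) / 3) = t at *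
  rw [← hs, ← hut]
  field_simp
  ring

lemma inv_sphX_add {z : Fin 4 → ℝ} :
    ((sphX 0 z : ℂ) + Complex.I * (sphX 1 z : ℂ))⁻¹
      = ((Real.sin (z 1) : ℂ) - Complex.I * (Real.cos (z 1) : ℂ))
        / (Real.sqrt (1 - z 0 ^ 2) : ℂ) := by
  have htrig : (Real.sin (z 1) : ℂ) ^ 2 + (Real.cos (z 1) : ℂ) ^ 2 = 1 := by
    exact_mod_cast Real.sin_sq_add_cos_sq (z 1)
  have hinv : ((Real.sin (z 1) : ℂ) + Complex.I * (Real.cos (z 1) : ℂ))⁻¹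
      = (Real.sin (z 1) : ℂ) - Complex.I * (Real.cos (z 1) : ℂ) := by
    refine inv_eq_of_mul_eq_one_right ?_
    linear_combination htrig - (Real.cos (z 1) : ℂ) ^ 2 * Complex.I_sq
  rw [← hinv, div_eq_mul_inv, ← mul_inv]
  simp only [sphX]
  push_cast
  ring

lemma sphJ_div_sphX {z : Fin 4 → ℝ} (hD : 0 < 1 - z 0 ^ 2) :
    ((sphJ 0 z : ℂ) + Complex.I * (sphJ 1 z : ℂ)) / ((sphX 0 z : ℂ) + Complex.I * (sphX 1 z : ℂ))
      = (z 0 : ℂ) * (z 3 : ℂ) / (Real.sqrt (1 - z 0 ^ 2) : ℂ) ^ 2 - Complex.I * (z 2 : ℂ) := by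
  have htrig : (Real.sin (z 1) : ℂ) ^ 2 + (Real.cos (z 1) : ℂ) ^ 2 = 1 := by
    exact_mod_cast Real.sin_sq_add_cos_sq (z 1)
  have hs0 : (Real.sqrt (1 - z 0 ^ 2) : ℂ) ≠ 0 :=
    Complex.ofReal_ne_zero.mpr (Real.sqrt_pos.mpr hD).ne'
  rw [div_eq_mul_inv, inv_sphX_add]
  simp only [sphJ, Complex.ofReal_add, Complex.ofReal_sub, Complex.ofReal_mul, Complex.ofReal_div]
  generalize (Real.sqrt (1 - z 0 ^ 2) : ℂ) = s at *
  generalize (Real.sin (z 1) : ℂ) = S at *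
  generalize (Real.cos (z 1) : ℂ) = C at *
  field_simp
  linear_combination (z 0 * z 3 - Complex.I * s ^ 2 * z 2 : ℂ) * htrig
    + (S * C * s ^ 2 * z 2 - C ^ 2 * z 0 * z 3 : ℂ) * Complex.I_sq

/-- The control-matrix identity Π′·∇H_i = P·(F_{i1}∇H₁ + F_{i2}∇H₂) of the
Goryachev system holds on 0 < u < 1, for i = 1, 2. -/
theorem Gor_control_matrix (a b : ℝ) (z : Fin 4 → ℝ) (h0 : 0 < z 0) (h1 : z 0 < 1) :
    ∀ r : Fin 4,
      (∑ c : Fin 4, GorP a z r c * (pd4 c (H1Gor a b) z : ℂ))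
        = ∑ c : Fin 4, canPC r c
            * (F11 z * (pd4 c (H1Gor a b) z : ℂ) + F12 z * (pd4 c (H2Gor a b) z : ℂ)) ∧
      (∑ c : Fin 4, GorP a z r c * (pd4 c (H2Gor a b) z : ℂ))
        = ∑ c : Fin 4, canPC r c
            * (F21 a z * (pd4 c (H1Gor a b) z : ℂ) + F22 z * (pd4 c (H2Gor a b) z : ℂ)) := by
  have hD : 0 < 1 - z 0 ^ 2 := by nlinarith
  have hs := Real.sq_sqrt hD.le
  have hs0 := (Real.sqrt_pos.mpr hD).ne'
  have ht0 := (Real.rpow_pos_of_pos h0 ((1 : ℝ) / 3)).ne'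
  have hut := rpow_one_third_cube h0
  have htrig := Real.sin_sq_add_cos_sq (z 1)
  have hexp : Complex.exp (Complex.I * ((z 1 : ℝ) : ℂ))
      = (Real.cos (z 1) : ℂ) + Complex.I * (Real.sin (z 1) : ℂ) := by
    rw [mul_comm, Complex.exp_mul_I, Complex.ofReal_cos, Complex.ofReal_sin, mul_comm Complex.I]
  have hF11 : F11 z = -((z 0 ^ ((1 : ℝ) / 3) : ℝ) : ℂ)
      * ((z 0 : ℂ) * (z 3 : ℂ) / (Real.sqrt (1 - z 0 ^ 2) : ℂ) ^ 2 - Complex.I * (z 2 : ℂ))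
      - 2 * (z 3 : ℂ) / (3 * ((z 0 ^ ((1 : ℝ) / 3) : ℝ) : ℂ) ^ 2) := by
    rw [F11, mul_div_assoc, sphJ_div_sphX hD]
    simp only [sphX, sphJ, rpow_two_thirds_eq h0]
    push_cast
    ring
  have hF21 : F21 a z = -(a : ℂ) * ((z 0 ^ ((1 : ℝ) / 3) : ℝ) : ℂ) ^ 2 / 2
        * (((Real.sin (z 1) : ℂ) - Complex.I * (Real.cos (z 1) : ℂ))
          / (Real.sqrt (1 - z 0 ^ 2) : ℂ))
      - 2 / 3 * ((z 0 ^ ((1 : ℝ) / 3) : ℝ) : ℂ) * (z 3 : ℂ)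
        * ((z 0 : ℂ) * (z 3 : ℂ) / (Real.sqrt (1 - z 0 ^ 2) : ℂ) ^ 2 - Complex.I * (z 2 : ℂ))
      - 4 * (z 3 : ℂ) ^ 2 / (9 * ((z 0 ^ ((1 : ℝ) / 3) : ℝ) : ℂ) ^ 2) := by
    rw [← inv_sphX_add, ← sphJ_div_sphX hD, F21]
    simp only [show sphX 2 z = z 0 from rfl, show sphJ 2 z = -z 3 from rfl,
      rpow_two_thirds_eq h0]
    generalize (sphX 0 z : ℂ) + Complex.I * (sphX 1 z : ℂ) = w
    push_cast
    ring
  have hF12 : F12 z = 1 / ((z 0 ^ ((1 : ℝ) / 3) : ℝ) : ℂ) ^ 2 := by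
    simp only [F12, sphX, rpow_two_thirds_eq h0, Complex.ofReal_pow]
  have hF22 : F22 z = 2 * (z 3 : ℂ) / (3 * ((z 0 ^ ((1 : ℝ) / 3) : ℝ) : ℂ) ^ 2) := by
    simp only [F22, sphX, sphJ, rpow_two_thirds_eq h0]
    push_cast
    ring
  simp only [pd4_H1Gor a b h0 h1, pd4_H2Gor a b h0 h1, hF11, hF12, hF21, hF22, GorP, hexp,
    rpow_two_thirds_eq h0, rpow_four_thirds_eq h0]
  generalize Real.sqrt (1 - z 0 ^ 2) = s at *
  generalize z 0 ^ ((1 : ℝ) / 3) = t at *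
  generalize Real.sin (z 1) = S at *
  generalize Real.cos (z 1) = C at *
  generalize z 2 = p at *
  generalize z 3 = q at *
  have hsC : 1 - (z 0 : ℂ) ^ 2 = (s : ℂ) ^ 2 := by exact_mod_cast hs.symm
  have hutC : (z 0 : ℂ) = (t : ℂ) ^ 3 := by exact_mod_cast hut.symm
  have hstC : (s : ℂ) ^ 2 = 1 - (t : ℂ) ^ 6 := by
    rw [← hsC, hutC]
    ring
  have htrigC : (S : ℂ) ^ 2 + (C : ℂ) ^ 2 = 1 := by exact_mod_cast htrig
  have hs0C : (s : ℂ) ≠ 0 := Complex.ofReal_ne_zero.mpr hs0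
  have ht0C : (t : ℂ) ≠ 0 := Complex.ofReal_ne_zero.mpr ht0
  have hI := Complex.I_sq
  intro r
  fin_cases r <;> constructor <;>
    simp [Fin.sum_univ_four, canPC, gradH1, gradH2, hsC] <;>
    rw [hutC] <;> clear * - hstC htrigC hs0C ht0C hI <;>
    field_simp
  all_goals grind
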